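/- arXiv:math/0511400 — 7 statements merged into one kernel-verified Lean document; each statement's English description precedes it below -/
import Mathlib

section
/- Every finite almost cyclic group is cyclic. -/
/-!
Jordan's theorem: in a transitive action of a group `G` on a finite set `X` with at least two
points, some element of `G` has no fixed point. Otherwise the point stabilizers cover `G`; they are
`|X|` subgroups of index `|X|`, and such a cover has no room for overlaps, although all of them
contain `1`. For the action on `G ⧸ H` this says that the conjugates of a proper subgroup `H` of
finite index do not cover `G`.

Let the conjugates of `H = ⟨x⟩` cover `G`. For every normal subgroup `N` of finite index the same
holds for `N ⊔ H`, hence `N ⊔ H = ⊤` and `G ⧸ N` is abelian. If the subgroups `N` intersect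
trivially, then `G` itself is abelian, so `H` is its only conjugate and `G = ⟨x⟩`.
-/

section

open MulAction Pointwise

variable {G : Type*} [Group G]

theorem subsingleton_of_forall_fixedBy_nonempty {X : Type*} [MulAction G X] [IsPretransitive G X]
    [Finite X] (h : ∀ g : G, (fixedBy X g).Nonempty) : Subsingleton X := by
  classical
  have := Fintype.ofFinite X
  have : Nonempty X := (h 1).to_type
  have index_eq (x : X) : (stabilizer G x).index = Nat.card X := index_stabilizer_of_transitive G x
  have finiteIndex (x : X) : (stabilizer G x).FiniteIndex :=
    ⟨(index_eq x).trans_ne Nat.card_pos.ne'⟩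
  have cover : ⋃ x ∈ (Finset.univ : Finset X), (1 : G) • (stabilizer G x : Set G) = Set.univ := by
    refine Set.eq_univ_of_forall fun g => ?_
    obtain ⟨x, hx⟩ := h g
    simpa only [Finset.mem_univ, Set.iUnion_true, one_smul, Set.mem_iUnion] using ⟨x, hx⟩
  have sum_inv_index : ∑ x : X, ((stabilizer G x).index : ℚ)⁻¹ = 1 := by
    simp [index_eq]
  have disjoint := Subgroup.pairwiseDisjoint_leftCoset_cover_of_sum_inv_index_eq_one cover
    sum_inv_index
  refine ⟨fun x y => disjoint.elim_set (by simp [finiteIndex]) (by simp [finiteIndex]) 1 ?_ ?_⟩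
  all_goals simp only [one_smul, SetLike.mem_coe, one_mem]

theorem eq_top_of_forall_exists_conj_mem {H : Subgroup G} [H.FiniteIndex]
    (h : ∀ g : G, ∃ a : G, a * g * a⁻¹ ∈ H) : H = ⊤ := by
  suffices Subsingleton (G ⧸ H) from QuotientGroup.subgroup_eq_top_of_subsingleton H this
  refine subsingleton_of_forall_fixedBy_nonempty (G := G) fun g => ?_
  obtain ⟨a, ha⟩ := h g⁻¹
  refine ⟨(a⁻¹ : G), QuotientGroup.eq.2 ?_⟩
  simpa [mul_assoc] using ha

theorem isMulCommutative_of_forall_exists_conj_mem [Group.ResiduallyFinite G] {H : Subgroup G}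
    [IsMulCommutative H] (h : ∀ g : G, ∃ a : G, a * g * a⁻¹ ∈ H) : IsMulCommutative G := by
  rw [← commutator_eq_bot_iff, eq_bot_iff, ← Group.ResiduallyFinite.iInf_eq_bot]
  refine le_iInf fun N => ?_
  have : (N.toSubgroup ⊔ H).FiniteIndex := Subgroup.finiteIndex_of_le le_sup_left
  have sup_eq_top : N.toSubgroup ⊔ H = ⊤ :=
    eq_top_of_forall_exists_conj_mem fun g => (h g).imp fun _ ha => Subgroup.mem_sup_right ha
  exact Subgroup.Normal.commutator_le_of_self_sup_commutative_eq_top sup_eq_top inferInstance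

theorem isCyclic_of_finite_almost_cyclic_general [Group.ResiduallyFinite G]
    (hG : ∃ x : G, ∀ y : G, ∃ a : G, ∃ n : ℤ, a * y * a⁻¹ = x ^ n) : IsCyclic G := by
  obtain ⟨x, hx⟩ := hG
  have : IsMulCommutative G := isMulCommutative_of_forall_exists_conj_mem
    (H := Subgroup.zpowers x) fun y => (hx y).imp fun _ ⟨n, hn⟩ => ⟨n, hn.symm⟩
  refine ⟨x, fun y => ?_⟩
  obtain ⟨a, n, hn⟩ := hx y
  have conj_eq : a * y * a⁻¹ = y := by rw [mul_comm' a y, mul_inv_cancel_right]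
  exact ⟨n, hn.symm.trans conj_eq⟩

end

/-- Every finite almost cyclic group is cyclic. -/
theorem isCyclic_of_finite_almost_cyclic {G : Type*} [Group G] [Finite G]
    (hG : ∃ x : G, ∀ y : G, ∃ a : G, ∃ n : ℤ, a * y * a⁻¹ = x ^ n) :
    IsCyclic G :=
  isCyclic_of_finite_almost_cyclic_general hG
end

section
/- Let G be almost cyclic with conjugate generator x, and let N be a nontrivial normal subgroup of G. Then there exists a smallest positive integer n such that x^n ∈ N, and for this n one has N ∩ ⟨x⟩ = ⟨x^n⟩. -/
/-!
`N` is the stabilizer of the base coset of `G ⧸ N`, so the exponents `k` with `x ^ k ∈ N` are the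
multiples of the period `n` of `x` at that coset, whence `N ⊓ ⟨x⟩ = ⟨x ^ n⟩`. Because `N` is normal,
a conjugate in `⟨x⟩` of a nontrivial element of `N` still lies in `N`; hence `N ⊓ ⟨x⟩` is
nontrivial, which rules out `n = 0`.
-/

open MulAction Subgroup

theorem stabilizer_inf_zpowers {G α : Type*} [Group G] [MulAction G α] (g : G) (a : α) :
    stabilizer G a ⊓ zpowers g = zpowers (g ^ period g a) := by
  refine le_antisymm ?_ (zpowers_le.2 ⟨pow_period_smul g a, npow_mem_zpowers g _⟩)
  rintro _ ⟨hfix, k, rfl⟩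
  obtain ⟨j, rfl⟩ : (period g a : ℤ) ∣ k := zpow_smul_eq_iff_period_dvd.1 hfix
  exact ⟨j, by simp only [zpow_mul, zpow_natCast]⟩

theorem inf_ne_bot_of_forall_exists_conj_mem {G : Type*} [Group G] {N K : Subgroup G} [N.Normal]
    (hN : N ≠ ⊥) (hK : ∀ y ∈ N, ∃ a : G, a * y * a⁻¹ ∈ K) : N ⊓ K ≠ ⊥ := by
  obtain ⟨y, hyN, hy⟩ := N.bot_or_exists_ne_one.resolve_left hN
  obtain ⟨a, ha⟩ := hK y hyN
  have hconj : a * y * a⁻¹ ∈ N ⊓ K := ⟨‹N.Normal›.conj_mem y hyN a, ha⟩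
  intro hbot
  rw [hbot, mem_bot, conj_eq_one_iff] at hconj
  exact hy hconj

/-- For a nontrivial normal subgroup `N` of an almost cyclic group with
conjugate generator `x`, there is a smallest positive `n` with `x ^ n ∈ N`, and
`N ⊓ ⟨x⟩ = ⟨x ^ n⟩`. -/
theorem normal_inf_zpowers_eq_zpowers_pow {G : Type*} [Group G] (x : G)
    (hx : ∀ y : G, ∃ a : G, ∃ n : ℤ, a * y * a⁻¹ = x ^ n)
    (N : Subgroup G) [N.Normal] (hN : N ≠ ⊥) :
    ∃ n : ℕ, 0 < n ∧ x ^ n ∈ N ∧ (∀ m : ℕ, 0 < m → x ^ m ∈ N → n ≤ m) ∧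
      N ⊓ Subgroup.zpowers x = Subgroup.zpowers (x ^ n) := by
  let q : G ⧸ N := (1 : G)
  have hstab : stabilizer G q = N := stabilizer_quotient N
  have hinf : N ⊓ zpowers x = zpowers (x ^ period x q) := by
    rw [← stabilizer_inf_zpowers, hstab]
  have hne : N ⊓ zpowers x ≠ ⊥ := inf_ne_bot_of_forall_exists_conj_mem hN fun y _ =>
    (hx y).imp fun _ ⟨k, hk⟩ => ⟨k, hk.symm⟩
  have hpos : 0 < period x q := by
    refine Nat.pos_of_ne_zero fun hzero => hne ?_
    rw [hinf, hzero, pow_zero, zpowers_one_eq_bot]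
  have hmem (m : ℕ) : x ^ m ∈ N ↔ x ^ m • q = q := by rw [← mem_stabilizer_iff, hstab]
  exact ⟨period x q, hpos, (hmem _).2 (pow_period_smul x q),
    fun m hm hxm => period_le_of_fixed hm ((hmem m).1 hxm), hinf⟩
end

section
/- Let G be almost cyclic with conjugate generator x, where x has prime order p. Then G is a simple group. -/
/-!
If every element of `G` is conjugate into a subgroup `H`, then a normal subgroup `N` of `G` is
determined by `N ⊓ H`. When `H` is simple, this intersection is `⊥` or `H`, so `N` is `⊥` or `⊤`.
A conjugate generator of prime order provides such an `H`, namely the cyclic subgroup it generates.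
-/

theorem le_of_inter_subset_of_forall_conj_mem {G : Type*} [Group G] {S : Set G}
    (hS : ∀ y : G, ∃ a : G, a * y * a⁻¹ ∈ S) {N M : Subgroup G} [hN : N.Normal] [hM : M.Normal]
    (h : (N : Set G) ∩ S ⊆ M) : N ≤ M := by
  intro y hyN
  obtain ⟨a, hayS⟩ := hS y
  have hayM : a * y * a⁻¹ ∈ M := h ⟨hN.conj_mem y hyN a, hayS⟩
  simpa [mul_assoc] using hM.conj_mem _ hayM a⁻¹

theorem disjoint_or_le_of_normal_of_isSimpleGroup {G : Type*} [Group G] (N H : Subgroup G)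
    [N.Normal] [IsSimpleGroup H] : Disjoint N H ∨ H ≤ N := by
  rw [← Subgroup.subgroupOf_eq_bot, ← Subgroup.subgroupOf_eq_top]
  exact Subgroup.Normal.eq_bot_or_eq_top inferInstance

theorem isSimpleGroup_of_almost_cyclic_prime_order_general {G : Type*} [Group G] (H : Subgroup G)
    [IsSimpleGroup H] (hH : ∀ y : G, ∃ a : G, a * y * a⁻¹ ∈ H) : IsSimpleGroup G where
  toNontrivial := H.subtype_injective.nontrivial
  eq_bot_or_eq_top_of_normal N _ := by
    rcases disjoint_or_le_of_normal_of_isSimpleGroup N H with hdisj | hle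
    · exact .inl (le_bot_iff.1 (le_of_inter_subset_of_forall_conj_mem hH hdisj.le_bot))
    · have hinter : ((⊤ : Subgroup G) : Set G) ∩ H ⊆ N := Set.inter_subset_right.trans hle
      exact .inr (top_le_iff.1 (le_of_inter_subset_of_forall_conj_mem hH hinter))

theorem isSimpleGroup_zpowers_of_prime_orderOf {G : Type*} [Group G] {x : G}
    (hx : (orderOf x).Prime) : IsSimpleGroup (Subgroup.zpowers x) :=
  have : Fact (orderOf x).Prime := ⟨hx⟩
  isSimpleGroup_of_prime_card (Nat.card_zpowers x)

/-- An almost cyclic group with a conjugate generator of prime order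
is simple. -/
theorem isSimpleGroup_of_almost_cyclic_prime_order {G : Type*} [Group G] (x : G)
    (hx : ∀ y : G, ∃ a : G, ∃ n : ℤ, a * y * a⁻¹ = x ^ n)
    (p : ℕ) (hp : p.Prime) (hord : orderOf x = p) :
    IsSimpleGroup G := by
  have := isSimpleGroup_zpowers_of_prime_orderOf (hord ▸ hp)
  exact isSimpleGroup_of_almost_cyclic_prime_order_general (Subgroup.zpowers x)
    (by simpa only [Subgroup.mem_zpowers_iff, eq_comm] using hx)
end

section
/- Let G be almost cyclic with conjugate generator x of prime order p. Then either G is isomorphic to ℤ/pℤ, or G is perfect, i.e., the commutator subgroup [G,G] equals G. -/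
/-!
Let `H` be a subgroup meeting every conjugacy class. A normal subgroup `N` is the union of the
conjugates of `N ⊓ H`, so it is determined by `N ⊓ H`. If `H` is simple, then so is `G`, and the
commutator subgroup is trivial or everything. If it is trivial, then `H` is normal, so `H` contains
every conjugacy class it meets and equals `G`. The subgroup generated by an element of prime order
is simple.
-/

/-- The subgroup `H` meets every conjugacy class of `G`. An almost cyclic group is one in which
a cyclic subgroup has this property. -/
def MeetsConjClasses {G : Type*} [Group G] (H : Subgroup G) : Prop :=
  ∀ y : G, ∃ a : G, a * y * a⁻¹ ∈ H

namespace MeetsConjClasses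

variable {G : Type*} [Group G] {H : Subgroup G}

theorem le_of_inf_le (hH : MeetsConjClasses H) {M N : Subgroup G} [hM : M.Normal] [hN : N.Normal]
    (h : N ⊓ H ≤ M) : N ≤ M := by
  intro y hy
  obtain ⟨a, ha⟩ := hH y
  have conj_mem : a * y * a⁻¹ ∈ M := h ⟨hN.conj_mem y hy a, ha⟩
  simpa [mul_assoc] using hM.conj_mem _ conj_mem a⁻¹

theorem eq_top_of_le_normal (hH : MeetsConjClasses H) {N : Subgroup G} [N.Normal] (h : H ≤ N) :
    N = ⊤ :=
  top_le_iff.mp (hH.le_of_inf_le (inf_le_right.trans h))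

theorem isSimpleGroup (hH : MeetsConjClasses H) [IsSimpleGroup H] : IsSimpleGroup G where
  toNontrivial := H.subtype_injective.nontrivial
  eq_bot_or_eq_top_of_normal N hN := by
    rcases (hN.subgroupOf H).eq_bot_or_eq_top with hbot | htop
    · left
      have disjoint : Disjoint N H := Subgroup.subgroupOf_eq_bot.mp hbot
      exact le_bot_iff.mp (hH.le_of_inf_le disjoint.le_bot)
    · right
      exact hH.eq_top_of_le_normal (Subgroup.subgroupOf_eq_top.mp htop)

end MeetsConjClasses

theorem meetsConjClasses_zpowers_iff {G : Type*} [Group G] {x : G} :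
    MeetsConjClasses (Subgroup.zpowers x) ↔ ∀ y : G, ∃ a : G, ∃ n : ℤ, a * y * a⁻¹ = x ^ n := by
  simp only [MeetsConjClasses, Subgroup.mem_zpowers_iff, eq_comm]

theorem nonempty_mulEquiv_zmod_of_zpowers_eq_top {G : Type*} [Group G] {x : G}
    (hx : Subgroup.zpowers x = ⊤) : Nonempty (G ≃* Multiplicative (ZMod (orderOf x))) :=
  have generates : ∀ y : G, y ∈ Subgroup.zpowers x := (Subgroup.eq_top_iff' _).mp hx
  ⟨(zmodMulEquivOfGenerator generates
    (orderOf_eq_card_of_forall_mem_zpowers generates).symm).symm⟩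

theorem almost_cyclic_prime_order_iso_zmod_or_perfect_general {G : Type*} [Group G]
    {H : Subgroup G} [IsSimpleGroup H] (hH : MeetsConjClasses H) :
    H = ⊤ ∨ commutator G = ⊤ := by
  have : IsSimpleGroup G := hH.isSimpleGroup
  have commutator_normal : (commutator G).Normal := inferInstance
  refine commutator_normal.eq_bot_or_eq_top.imp_left fun commutator_eq_bot => ?_
  have : H.Normal := .of_commutator_le G (commutator_eq_bot.trans_le bot_le)
  exact hH.eq_top_of_le_normal le_rfl

/-- An almost cyclic group with a conjugate generator of prime order `p`
is either isomorphic to `ℤ/pℤ` or perfect. -/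
theorem almost_cyclic_prime_order_iso_zmod_or_perfect {G : Type*} [Group G] (x : G)
    (hx : ∀ y : G, ∃ a : G, ∃ n : ℤ, a * y * a⁻¹ = x ^ n)
    (p : ℕ) (hp : p.Prime) (hord : orderOf x = p) :
    Nonempty (G ≃* Multiplicative (ZMod p)) ∨ commutator G = ⊤ := by
  subst hord
  have : IsSimpleGroup (Subgroup.zpowers x) := isSimpleGroup_zpowers_of_prime_orderOf hp
  exact (almost_cyclic_prime_order_iso_zmod_or_perfect_general
    (meetsConjClasses_zpowers_iff.mpr hx)).imp_left nonempty_mulEquiv_zmod_of_zpowers_eq_top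
end

section
/- Let G be almost cyclic with a conjugate generator x of order 2. Then G is isomorphic to ℤ/2ℤ. -/
/-- `x` is a conjugate generator of `G`: every element of `G` is conjugate to a power of `x`.
A group is almost cyclic when it has one. -/
def IsConjugateGenerator {G : Type*} [Group G] (x : G) : Prop :=
  ∀ y : G, ∃ a : G, ∃ n : ℤ, a * y * a⁻¹ = x ^ n

namespace IsConjugateGenerator

open Subgroup

variable {G : Type*} [Group G] {x : G}

theorem orderOf_dvd (hx : IsConjugateGenerator x) (y : G) : orderOf y ∣ orderOf x := by
  obtain ⟨a, n, h⟩ := hx y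
  have hmem : MulAut.conj a y ∈ zpowers x := ⟨n, h.symm⟩
  rw [← (MulAut.conj a).orderOf_eq y]
  exact orderOf_dvd_of_mem_zpowers hmem

theorem exponent_eq_orderOf (hx : IsConjugateGenerator x) : Monoid.exponent G = orderOf x :=
  Nat.dvd_antisymm (Monoid.exponent_dvd.mpr hx.orderOf_dvd) (Monoid.order_dvd_exponent x)

theorem zpowers_eq_top (hx : IsConjugateGenerator x) [hnormal : (zpowers x).Normal] :
    zpowers x = ⊤ := by
  refine (eq_top_iff' _).mpr fun y ↦ ?_
  obtain ⟨a, n, h⟩ := hx y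
  have hconj : a * y * a⁻¹ ∈ zpowers x := ⟨n, h.symm⟩
  rwa [hnormal.mem_comm_iff, inv_mul_cancel_left] at hconj

end IsConjugateGenerator

/-- An almost cyclic group with a conjugate generator of order 2 is
isomorphic to `ℤ/2ℤ`. -/
theorem almost_cyclic_order_two_iso_zmod_two {G : Type*} [Group G] (x : G)
    (hx : ∀ y : G, ∃ a : G, ∃ n : ℤ, a * y * a⁻¹ = x ^ n)
    (hord : orderOf x = 2) :
    Nonempty (G ≃* Multiplicative (ZMod 2)) := by
  have hgen : IsConjugateGenerator x := hx
  have hexp : Monoid.exponent G = 2 := hgen.exponent_eq_orderOf.trans hord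
  have : IsMulCommutative G := ⟨⟨mul_comm_of_exponent_two hexp⟩⟩
  have htop : Subgroup.zpowers x = ⊤ := hgen.zpowers_eq_top
  have hcard : Nat.card G = 2 := (orderOf_eq_card_of_zpowers_eq_top htop).symm.trans hord
  exact ⟨(zmodMulEquivOfGenerator ((Subgroup.eq_top_iff' _).mp htop) hcard).symm⟩
end

section
/- Let G be almost cyclic with conjugate generator x, and let N be a normal subgroup of G such that G/N is cyclic. Then N is itself an almost cyclic group; in fact, x^m is a conjugate generator for N, where m is the smallest positive integer with x^m ∈ N. -/
/-!
Let `m` be the order of `x` in `G ⧸ N`, read as `0` if it is infinite; then `x ^ n ∈ N` exactly when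
`m ∣ n`, so every power of `x` lying in `N` is a power of `x ^ m`. As `G ⧸ N` is commutative,
conjugates have the same image there, so `x` generates `G ⧸ N`. Hence if `a` conjugates `y ∈ N` to
`x ^ n`, then `a` is congruent modulo `N` to some `x ^ k`, and `x ^ (-k) * a ∈ N` also conjugates
`y` to `x ^ n`, because `x ^ k` commutes with `x ^ n`.
-/

open Subgroup

section AlmostCyclic

variable {G : Type*} [Group G] {x : G} {N : Subgroup G}

/-- `w` is a conjugate generator of the group `H`: it lies in `H` and every element of `H` is
conjugate, by an element of `H`, to a power of `w`. It is stated for a subgroup `H` of an ambient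
group, so that all elements and powers live in the same type. -/
def IsConjGenerator (H : Subgroup G) (w : G) : Prop :=
  w ∈ H ∧ ∀ y ∈ H, ∃ z ∈ H, ∃ q : ℤ, z * y * z⁻¹ = w ^ q

theorem zpowers_map_eq_top_of_forall_conj_eq_zpow {Q : Type*} [Group Q] [IsMulCommutative Q]
    {f : G →* Q} (hf : Function.Surjective f)
    (hx : ∀ y : G, ∃ a : G, ∃ n : ℤ, a * y * a⁻¹ = x ^ n) : zpowers (f x) = ⊤ := by
  refine (eq_top_iff' _).2 (hf.forall.2 fun y => ?_)
  obtain ⟨a, n, hay⟩ := hx y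
  refine mem_zpowers_iff.2 ⟨n, ?_⟩
  calc
    f x ^ n = f a * f y * (f a)⁻¹ := by rw [← map_zpow, ← hay, map_mul, map_mul, map_inv]
    _ = f y := by rw [mul_comm' (f a), mul_inv_cancel_right]

variable [N.Normal]

theorem exists_mem_conj_eq_zpow_of_mk_mem_zpowers {a y : G} {n : ℤ} (hay : a * y * a⁻¹ = x ^ n)
    (ha : (a : G ⧸ N) ∈ zpowers (x : G ⧸ N)) : ∃ z ∈ N, z * y * z⁻¹ = x ^ n := by
  obtain ⟨k, hk⟩ := mem_zpowers_iff.1 ha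
  have hmem : (x ^ k)⁻¹ * a ∈ N := QuotientGroup.eq.1 hk
  refine ⟨(x ^ k)⁻¹ * a, hmem, ?_⟩
  calc
    (x ^ k)⁻¹ * a * y * ((x ^ k)⁻¹ * a)⁻¹ = (x ^ k)⁻¹ * (a * y * a⁻¹) * x ^ k := by group
    _ = x ^ n := by rw [hay]; group

theorem zpow_mem_iff_orderOf_mk_dvd {n : ℤ} : x ^ n ∈ N ↔ (orderOf (x : G ⧸ N) : ℤ) ∣ n := by
  rw [orderOf_dvd_iff_zpow_eq_one, ← QuotientGroup.mk_zpow, QuotientGroup.eq_one_iff]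

theorem orderOf_mk_eq_of_minimal {m : ℕ} (hm : 0 < m) (hxm : x ^ m ∈ N)
    (hmin : ∀ l : ℕ, 0 < l → x ^ l ∈ N → m ≤ l) : orderOf (x : G ⧸ N) = m := by
  simp only [orderOf_eq_iff hm, ← QuotientGroup.mk_pow, ne_eq, QuotientGroup.eq_one_iff]
  exact ⟨hxm, fun l hlm hl hxl => (hmin l hl hxl).not_gt hlm⟩

theorem isConjGenerator_pow_orderOf_mk (hgen : zpowers (x : G ⧸ N) = ⊤)
    (hN : ∀ y ∈ N, ∃ a : G, ∃ n : ℤ, a * y * a⁻¹ = x ^ n) :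
    IsConjGenerator N (x ^ orderOf (x : G ⧸ N)) := by
  refine ⟨(QuotientGroup.eq_one_iff _).1 (pow_orderOf_eq_one (x : G ⧸ N)), fun y hy => ?_⟩
  obtain ⟨a, n, hay⟩ := hN y hy
  obtain ⟨z, hz, hzy⟩ :=
    exists_mem_conj_eq_zpow_of_mk_mem_zpowers hay (hgen ▸ mem_top (a : G ⧸ N))
  have hxn : x ^ n ∈ N := hzy ▸ N.mul_mem (N.mul_mem hz hy) (N.inv_mem hz)
  obtain ⟨q, rfl⟩ := zpow_mem_iff_orderOf_mk_dvd.1 hxn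
  exact ⟨z, hz, q, by rw [hzy, zpow_mul, zpow_natCast]⟩

end AlmostCyclic

theorem normal_subgroup_almost_cyclic_of_cyclic_quotient_general {G : Type*} [Group G] (x : G)
    (N : Subgroup G) [N.Normal] (hgen : zpowers (x : G ⧸ N) = ⊤)
    (hN : ∀ y ∈ N, ∃ a : G, ∃ n : ℤ, a * y * a⁻¹ = x ^ n) :
    (∃ w, IsConjGenerator N w) ∧
    ∀ m : ℕ, 0 < m → x ^ m ∈ N → (∀ l : ℕ, 0 < l → x ^ l ∈ N → m ≤ l) →
      IsConjGenerator N (x ^ m) := by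
  have hpow := isConjGenerator_pow_orderOf_mk hgen hN
  refine ⟨⟨_, hpow⟩, fun m hm hxm hmin => ?_⟩
  rwa [orderOf_mk_eq_of_minimal hm hxm hmin] at hpow

/-- If `G` is almost cyclic with conjugate generator `x` and `G/N` is
cyclic, then `N` is almost cyclic; in fact `x ^ m` is a conjugate generator for `N`
whenever `m` is the smallest positive integer with `x ^ m ∈ N`. -/
theorem normal_subgroup_almost_cyclic_of_cyclic_quotient {G : Type*} [Group G] (x : G)
    (hx : ∀ y : G, ∃ a : G, ∃ n : ℤ, a * y * a⁻¹ = x ^ n)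
    (N : Subgroup G) [N.Normal] (hcyc : IsCyclic (G ⧸ N)) :
    (∃ w ∈ N, ∀ y ∈ N, ∃ z ∈ N, ∃ q : ℤ, z * y * z⁻¹ = w ^ q) ∧
    ∀ m : ℕ, 0 < m → x ^ m ∈ N → (∀ l : ℕ, 0 < l → x ^ l ∈ N → m ≤ l) →
      ∀ y ∈ N, ∃ z ∈ N, ∃ q : ℤ, z * y * z⁻¹ = (x ^ m) ^ q := by
  have hgen : zpowers (x : G ⧸ N) = ⊤ :=
    zpowers_map_eq_top_of_forall_conj_eq_zpow (QuotientGroup.mk'_surjective N) hx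
  have hgeneral := normal_subgroup_almost_cyclic_of_cyclic_quotient_general x N hgen fun y _ => hx y
  exact ⟨hgeneral.1, fun m hm hxm hmin => (hgeneral.2 m hm hxm hmin).2⟩
end

section
/- Let X be a type and r an element of the free group on X. If the one-relator group G = ⟨X | r⟩ is almost cyclic, then X has at most two elements (in particular X is finite with cardinality ≤ 2). -/
/-!
Abelianizing a presentation with generators `X` and relators `rels` and tensoring with `ℚ` turns it
into `ℚ^(X)` modulo the span of the exponent vectors of the relators. Elements generating the
abelianization span this quotient, so counting dimensions bounds `#X` by the number of such
elements plus the number of relators. Conjugate elements agree in the abelianization, so that of an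
almost cyclic group is generated by one element.
-/

open Cardinal

universe u

/-- A group is *almost cyclic* if it has a conjugate generator: an element `x` such that every
element is conjugate to an integer power of `x`. -/
def IsAlmostCyclic (G : Type*) [Group G] : Prop :=
  ∃ x : G, ∀ y : G, ∃ a : G, ∃ n : ℤ, a * y * a⁻¹ = x ^ n

theorem IsAlmostCyclic.isCyclic_abelianization {G : Type*} [Group G] (hG : IsAlmostCyclic G) :
    IsCyclic (Abelianization G) := by
  obtain ⟨x, hx⟩ := hG
  refine ⟨Abelianization.of x, fun y => ?_⟩
  obtain ⟨y, rfl⟩ := QuotientGroup.mk_surjective y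
  obtain ⟨a, n, hconj⟩ := hx y
  refine ⟨n, ?_⟩
  calc Abelianization.of x ^ n = Abelianization.of (a * y * a⁻¹) := by rw [hconj, map_zpow]
    _ = Abelianization.of y := by rw [map_mul, map_mul, map_inv, mul_inv_cancel_comm]

theorem span_image_eq_top_of_closure_eq_top {R A M : Type*} [Ring R] [AddGroup A]
    [AddCommGroup M] [Module R M] (f : A →+ M) {S : Set A} (hS : AddSubgroup.closure S = ⊤)
    (hf : Submodule.span R (Set.range f) = ⊤) : Submodule.span R (f '' S) = ⊤ := by
  rw [eq_top_iff, ← hf, Submodule.span_le, ← AddMonoidHom.coe_range, AddMonoidHom.range_eq_map,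
    ← hS, AddMonoidHom.map_closure]
  exact (AddSubgroup.closure_le (Submodule.span R (f '' S)).toAddSubgroup).2 Submodule.subset_span

section Presentation

variable {X : Type u}

/-- The exponent vector of a word: its coordinate at `i` is the sum of the exponents of the
generator `i`. It takes rational rather than integral values so that dimensions can be counted. -/
noncomputable def exponentVector : FreeGroup X →* Multiplicative (X →₀ ℚ) :=
  FreeGroup.lift fun i => Multiplicative.ofAdd (Finsupp.single i 1)

theorem lift_ofAdd_mkQ_single_apply (W : Submodule ℚ (X →₀ ℚ)) (w : FreeGroup X) :
    FreeGroup.lift (fun i => Multiplicative.ofAdd (W.mkQ (Finsupp.single i 1))) w =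
      Multiplicative.ofAdd (W.mkQ (exponentVector w).toAdd) := by
  have hhom : FreeGroup.lift (fun i => Multiplicative.ofAdd (W.mkQ (Finsupp.single i 1))) =
      W.mkQ.toAddMonoidHom.toMultiplicative.comp exponentVector := by
    ext i
    simp [exponentVector]
  exact DFunLike.congr_fun hhom w

/-- The subspace of `ℚ^(X)` spanned by the exponent vectors of the relators; the quotient by it is
the rationalized abelianization of `⟨X | rels⟩`. -/
noncomputable def relationSpan (rels : Set (FreeGroup X)) : Submodule ℚ (X →₀ ℚ) :=
  Submodule.span ℚ ((fun r => (exponentVector r).toAdd) '' rels)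

variable (rels : Set (FreeGroup X))

/-- The canonical map from the abelianization of `⟨X | rels⟩` to its rationalization, sending each
generator to the class of its basis vector. -/
noncomputable def abelianizationToQuotient :
    Additive (Abelianization (PresentedGroup rels)) →+ (X →₀ ℚ) ⧸ relationSpan rels :=
  (Abelianization.lift <| PresentedGroup.toGroup (rels := rels)
    (f := fun i => Multiplicative.ofAdd ((relationSpan rels).mkQ (Finsupp.single i 1)))
    fun r hr => by
      rw [lift_ofAdd_mkQ_single_apply, ofAdd_eq_one, Submodule.mkQ_apply,
        Submodule.Quotient.mk_eq_zero]
      exact Submodule.subset_span ⟨r, hr, rfl⟩).toAdditiveLeft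

theorem abelianizationToQuotient_of (i : X) :
    abelianizationToQuotient rels (.ofMul (Abelianization.of (PresentedGroup.of i))) =
      (relationSpan rels).mkQ (Finsupp.single i 1) := by
  simp [abelianizationToQuotient]

theorem span_range_abelianizationToQuotient :
    Submodule.span ℚ (Set.range (abelianizationToQuotient rels)) = ⊤ := by
  have hbasis : Submodule.span ℚ (Set.range fun i : X => Finsupp.single i (1 : ℚ)) = ⊤ := by
    simpa only [Finsupp.coe_basisSingleOne] using
      (Finsupp.basisSingleOne (R := ℚ) (ι := X)).span_eq
  rw [eq_top_iff, ← (relationSpan rels).range_mkQ, LinearMap.range_eq_map, ← hbasis,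
    Submodule.map_span]
  refine Submodule.span_mono ?_
  rintro _ ⟨_, ⟨i, rfl⟩, rfl⟩
  exact ⟨_, abelianizationToQuotient_of rels i⟩

theorem rank_relationSpan_le : Module.rank ℚ (relationSpan rels) ≤ #rels :=
  (rank_span_le _).trans mk_image_le

theorem mk_generators_le_mk_add_mk_relators
    {S : Set (Additive (Abelianization (PresentedGroup rels)))}
    (hS : AddSubgroup.closure S = ⊤) : #X ≤ #S + #rels := by
  have hquot : Module.rank ℚ ((X →₀ ℚ) ⧸ relationSpan rels) ≤ #S := by
    rw [← rank_top, ← span_image_eq_top_of_closure_eq_top (abelianizationToQuotient rels) hS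
      (span_range_abelianizationToQuotient rels)]
    exact (rank_span_le _).trans mk_image_le
  calc #X = Module.rank ℚ (X →₀ ℚ) := by rw [rank_finsupp_self, lift_uzero]
    _ = Module.rank ℚ ((X →₀ ℚ) ⧸ relationSpan rels) + Module.rank ℚ (relationSpan rels) :=
      (Submodule.rank_quotient_add_rank _).symm
    _ ≤ #S + #rels := add_le_add hquot (rank_relationSpan_le rels)

theorem mk_generators_le_one_add_mk_relators
    [IsCyclic (Abelianization (PresentedGroup rels))] : #X ≤ 1 + #rels := by
  obtain ⟨g, hg⟩ := isAddCyclic_iff_exists_zmultiples_eq_top.1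
    (inferInstance : IsAddCyclic (Additive (Abelianization (PresentedGroup rels))))
  rw [AddSubgroup.zmultiples_eq_closure] at hg
  simpa only [mk_singleton] using mk_generators_le_mk_add_mk_relators rels hg

end Presentation

theorem one_relator_almost_cyclic_card_le_two_general {X : Type*} (r : FreeGroup X)
    [IsCyclic (Abelianization (PresentedGroup ({r} : Set (FreeGroup X))))] :
    Finite X ∧ Nat.card X ≤ 2 := by
  have hcard : #X ≤ (2 : ℕ) := by
    simpa only [mk_singleton, one_add_one_eq_two, Nat.cast_ofNat] using
      mk_generators_le_one_add_mk_relators {r}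
  exact ⟨lt_aleph0_iff_finite.1 (hcard.trans_lt natCast_lt_aleph0),
    (toNat_le_iff_of_lt_aleph0 2 (hcard.trans_lt natCast_lt_aleph0)).2 hcard⟩

/-- If a one-relator group `⟨X | r⟩` is almost cyclic, then `X` has at
most two elements. -/
theorem one_relator_almost_cyclic_card_le_two {X : Type*} (r : FreeGroup X)
    (hG : ∃ x : PresentedGroup ({r} : Set (FreeGroup X)),
      ∀ y : PresentedGroup ({r} : Set (FreeGroup X)),
        ∃ a : PresentedGroup ({r} : Set (FreeGroup X)), ∃ n : ℤ,
          a * y * a⁻¹ = x ^ n) :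
    Finite X ∧ Nat.card X ≤ 2 :=
  have := IsAlmostCyclic.isCyclic_abelianization hG
  one_relator_almost_cyclic_card_le_two_general r
end
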